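/- Let μ₀ ∈ Lⁿ, let φ be a nonzero alternating bilinear map ℂⁿ × ℂⁿ → ℂⁿ, and let S(t) = Σ_{i≥1} sᵢtⁱ be a complex power series, not identically zero, with radius of convergence r > 0. If μ₀ + S(t)φ ∈ Lⁿ for every t ∈ ℂ with |t| < r, then δ_{μ₀}φ = 0 and φ∘φ = 0. -/

import Mathlib

/-!
Along the line `μ + c φ` the Jacobi identity is a quadratic equation in the scalar `c`,
`μ∘μ + c δ_μφ + c² φ∘φ = 0`, so as soon as it holds for three values of `c` all its coefficients
vanish. A convergent power series that is not formally constant takes infinitely many values on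
every disc around `0`, because any given value is omitted on a punctured neighbourhood of `0`.
-/

set_option synthInstance.maxHeartbeats 400000
set_option maxHeartbeats 1000000

noncomputable section

abbrev E (n : ℕ) : Type := Fin n → ℂ

abbrev Bil (n : ℕ) : Type := E n →L[ℂ] E n →L[ℂ] E n

/-- A bilinear map is alternating. -/
def IsAlt {n : ℕ} (μ : Bil n) : Prop := ∀ X, μ X X = 0

/-- The Jacobi identity. -/
def Jacobi {n : ℕ} (μ : Bil n) : Prop :=
  ∀ X Y Z, μ X (μ Y Z) + μ Y (μ Z X) + μ Z (μ X Y) = 0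

/-- `Lⁿ`, the set of Lie algebra laws on `ℂⁿ`. -/
def LieLaw (n : ℕ) : Set (Bil n) := {μ | IsAlt μ ∧ Jacobi μ}

/-- The orbit of a law under the action `(f*μ)(X,Y) = f⁻¹(μ(f X, f Y))` of `GL(n,ℂ)`. -/
def orbit {n : ℕ} (μ : Bil n) : Set (Bil n) :=
  {ν | ∃ f : E n ≃L[ℂ] E n, ∀ X Y, ν X Y = f.symm (μ (f X) (f Y))}

/-- The Gerstenhaber trilinear product `(φ∘ψ)(X,Y,Z)`. -/
def circ {n : ℕ} (φ ψ : Bil n) (X Y Z : E n) : E n :=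
  φ (ψ X Y) Z + φ (ψ Y Z) X + φ (ψ Z X) Y

/-- `Z²(μ,μ)`: alternating 2-cochains with `δ_μφ = μ∘φ + φ∘μ = 0`. -/
def Z2 {n : ℕ} (μ : Bil n) : Set (Bil n) :=
  {φ | IsAlt φ ∧ ∀ X Y Z, circ μ φ X Y Z + circ φ μ X Y Z = 0}

/-- The coboundary `δ_μ g`, for `g` an endomorphism:
`(δ_μ g)(X,Y) = −g(μ(X,Y)) + μ(g X, Y) + μ(X, g Y)`. -/
def delta1 {n : ℕ} (μ : Bil n) (g : E n →L[ℂ] E n) : Bil n :=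
  μ.comp g + (μ.flip.comp g).flip -
    (ContinuousLinearMap.compL ℂ (E n) (E n) (E n) g).comp μ

lemma delta1_apply {n : ℕ} (μ : Bil n) (g : E n →L[ℂ] E n) (X Y : E n) :
    delta1 μ g X Y = -g (μ X Y) + μ (g X) Y + μ X (g Y) := by
  simp [delta1]; ring

/-- `B²(μ,μ)`, the set of coboundaries. -/
def B2 {n : ℕ} (μ : Bil n) : Set (Bil n) := Set.range (delta1 μ)

/-- `f*μ`, defined using `Ring.inverse` so that it is defined for any `f`
(it agrees with the natural action when `f` is invertible). -/
def conj {n : ℕ} (f : E n →L[ℂ] E n) (μ : Bil n) : Bil n :=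
  (((((ContinuousLinearMap.compL ℂ (E n) (E n) (E n) (Ring.inverse f)).comp μ).flip).comp
    f).flip).comp f

lemma conj_apply {n : ℕ} (f : E n →L[ℂ] E n) (μ : Bil n) (X Y : E n) :
    conj f μ X Y = Ring.inverse f (μ (f X) (f Y)) := rfl

section Algebra

variable {R V : Type*} [CommRing R] [AddCommGroup V] [Module R V]

/-- A Lie algebra law on an arbitrary module, the counterpart of `LieLaw n`. It is a predicate on
bilinear maps, rather than a `LieRing` structure on `V`, because the law varies while `V` does
not. -/
def IsLieLaw (μ : V →ₗ[R] V →ₗ[R] V) : Prop :=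
  μ.IsAlt ∧ ∀ X Y Z, μ X (μ Y Z) + μ Y (μ Z X) + μ Z (μ X Y) = 0

/-- The product `φ∘ψ` of bilinear maps on an arbitrary module, the counterpart of `circ`. The
Chevalley coboundary `δ_μφ` is `gerstenhaber μ φ + gerstenhaber φ μ`. -/
def gerstenhaber (φ ψ : V →ₗ[R] V →ₗ[R] V) (X Y Z : V) : V :=
  φ (ψ X Y) Z + φ (ψ Y Z) X + φ (ψ Z X) Y

lemma IsLieLaw.gerstenhaber_self {μ : V →ₗ[R] V →ₗ[R] V} (h : IsLieLaw μ) (X Y Z : V) :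
    gerstenhaber μ μ X Y Z = 0 := by
  obtain ⟨alt, jacobi⟩ := h
  rw [gerstenhaber, ← alt.neg Z (μ X Y), ← alt.neg X (μ Y Z), ← alt.neg Y (μ Z X),
    ← neg_eq_zero, ← jacobi X Y Z]
  abel

lemma gerstenhaber_add_smul_self (μ φ : V →ₗ[R] V →ₗ[R] V) (c : R) (X Y Z : V) :
    gerstenhaber (μ + c • φ) (μ + c • φ) X Y Z =
      gerstenhaber μ μ X Y Z + c • (gerstenhaber μ φ X Y Z + gerstenhaber φ μ X Y Z) +
        c ^ 2 • gerstenhaber φ φ X Y Z := by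
  simp only [gerstenhaber, LinearMap.add_apply, LinearMap.smul_apply, map_add, map_smul]
  module

variable [IsDomain R] [Module.IsTorsionFree R V]

lemma coeff_eq_zero_of_quadratic_eq_zero {a b d : V} {C : Finset R} (hC : 2 < C.card)
    (h : ∀ c ∈ C, a + c • b + c ^ 2 • d = 0) : a = 0 ∧ b = 0 ∧ d = 0 := by
  obtain ⟨x, hx, y, hy, z, hz, hxy, hxz, hyz⟩ := Finset.two_lt_card.mp hC
  have divided_difference {c : R} (hc : c ∈ C) (hxc : x ≠ c) : b + (x + c) • d = 0 := by
    refine (smul_eq_zero.mp ?_).resolve_left (sub_ne_zero.mpr hxc)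
    linear_combination (norm := module) h x hx - h c hc
  have hd : d = 0 := by
    refine (smul_eq_zero.mp ?_).resolve_left (sub_ne_zero.mpr hyz)
    linear_combination (norm := module) divided_difference hy hxy - divided_difference hz hxz
  have hb : b = 0 := by simpa [hd] using divided_difference hy hxy
  exact ⟨by simpa [hb, hd] using h x hx, hb, hd⟩

theorem coboundary_eq_zero_and_gerstenhaber_self_eq_zero {μ φ : V →ₗ[R] V →ₗ[R] V}
    {C : Finset R} (hC : 2 < C.card) (hlaw : ∀ c ∈ C, IsLieLaw (μ + c • φ)) (X Y Z : V) :
    gerstenhaber μ φ X Y Z + gerstenhaber φ μ X Y Z = 0 ∧ gerstenhaber φ φ X Y Z = 0 :=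
  (coeff_eq_zero_of_quadratic_eq_zero hC fun c hc =>
    (gerstenhaber_add_smul_self μ φ c X Y Z).symm.trans ((hlaw c hc).gerstenhaber_self X Y Z)).2

end Algebra

section PowerSeries

open Filter Topology

variable {𝕜 : Type*} [NontriviallyNormedField 𝕜] {s : ℕ → 𝕜} {r : ℝ}

lemma hasFPowerSeriesAt_tsum_mul_pow (hr : 0 < r)
    (hconv : ∀ t : 𝕜, ‖t‖ < r → Summable fun i => s i * t ^ i) :
    HasFPowerSeriesAt (fun t => ∑' i, s i * t ^ i)
      (FormalMultilinearSeries.ofScalars 𝕜 s) (0 : 𝕜) := by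
  obtain ⟨t₀, ht₀, ht₀r⟩ := NormedField.exists_norm_lt 𝕜 hr
  refine ⟨‖t₀‖₊, ?_, by simpa using ht₀, fun {t} ht => ?_⟩
  · refine FormalMultilinearSeries.le_radius_of_tendsto _ (l := ‖(0 : 𝕜)‖) ?_
    simpa only [FormalMultilinearSeries.ofScalars_norm, coe_nnnorm, norm_mul, norm_pow]
      using (hconv t₀ ht₀r).tendsto_atTop_zero.norm
  · have htr : ‖t‖ < r := lt_trans (by simpa using ht) ht₀r
    simpa [mul_comm] using (hconv t htr).hasSum

lemma eventually_tsum_mul_pow_ne (hs : ∃ i ≠ 0, s i ≠ 0) (hr : 0 < r)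
    (hconv : ∀ t : 𝕜, ‖t‖ < r → Summable fun i => s i * t ^ i) (c : 𝕜) :
    ∀ᶠ t in 𝓝[≠] 0, ∑' i, s i * t ^ i ≠ c := by
  have hS := hasFPowerSeriesAt_tsum_mul_pow hr hconv
  refine (hS.analyticAt.eventually_eq_or_eventually_ne analyticAt_const).resolve_left fun heq => ?_
  obtain ⟨i, hi, hsi⟩ := hs
  have hseries := hS.eq_formalMultilinearSeries_of_eventually hasFPowerSeriesAt_const heq
  have hcoeff := congr_fun hseries i
  rw [constFormalMultilinearSeries_apply_of_nonzero hi,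
    FormalMultilinearSeries.ofScalars_eq_zero] at hcoeff
  exact hsi hcoeff

theorem infinite_image_tsum_mul_pow (hs : ∃ i ≠ 0, s i ≠ 0) (hr : 0 < r)
    (hconv : ∀ t : 𝕜, ‖t‖ < r → Summable fun i => s i * t ^ i) :
    ((fun t => ∑' i, s i * t ^ i) '' {t : 𝕜 | ‖t‖ < r}).Infinite := by
  intro hfin
  have hdisc : ∀ᶠ t : 𝕜 in 𝓝[≠] 0, ‖t‖ < r :=
    nhdsWithin_le_nhds (tendsto_norm_zero.eventually_lt_const hr)
  have havoid := (eventually_all_finite hfin).mpr fun c _ =>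
    eventually_tsum_mul_pow_ne hs hr hconv c
  obtain ⟨t, htr, ht⟩ := (hdisc.and havoid).exists
  exact ht _ ⟨t, htr, rfl⟩ rfl

end PowerSeries

theorem stmt14_general {𝕜 V : Type*} [NontriviallyNormedField 𝕜] [AddCommGroup V] [Module 𝕜 V]
    (μ₀ φ : V →ₗ[𝕜] V →ₗ[𝕜] V) {s : ℕ → 𝕜} (hs : ∃ i ≠ 0, s i ≠ 0) {r : ℝ} (hr : 0 < r)
    (hconv : ∀ t : 𝕜, ‖t‖ < r → Summable fun i => s i * t ^ i)
    (hlaw : ∀ t : 𝕜, ‖t‖ < r → IsLieLaw (μ₀ + (∑' i, s i * t ^ i) • φ)) :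
    (∀ X Y Z, gerstenhaber μ₀ φ X Y Z + gerstenhaber φ μ₀ X Y Z = 0) ∧
      (∀ X Y Z, gerstenhaber φ φ X Y Z = 0) := by
  obtain ⟨C, hCsub, hCcard⟩ := (infinite_image_tsum_mul_pow hs hr hconv).exists_subset_card_eq 3
  have hlawC : ∀ c ∈ C, IsLieLaw (μ₀ + c • φ) := by
    intro c hc
    obtain ⟨t, ht, rfl⟩ := hCsub hc
    exact hlaw t ht
  have hcoeff := coboundary_eq_zero_and_gerstenhaber_self_eq_zero (by lia) hlawC
  exact ⟨fun X Y Z => (hcoeff X Y Z).1, fun X Y Z => (hcoeff X Y Z).2⟩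

/-- if `μ₀ + S(t)φ ∈ Lⁿ` for all `|t| < r`, where `S(t) = Σ_{i≥1} sᵢtⁱ` is a
nonzero power series with radius of convergence `r > 0` and `φ ≠ 0` is alternating, then
`δ_{μ₀}φ = 0` and `φ∘φ = 0`. -/
theorem stmt14 (n : ℕ) (μ₀ : Bil n) (hμ : μ₀ ∈ LieLaw n) (φ : Bil n)
    (halt : IsAlt φ) (hφ0 : φ ≠ 0) (s : ℕ → ℂ) (hs0 : s 0 = 0) (hsne : ∃ i, s i ≠ 0)
    (r : ℝ) (hr : 0 < r) (hconv : ∀ t : ℂ, ‖t‖ < r → Summable fun i => s i * t ^ i)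
    (hlaw : ∀ t : ℂ, ‖t‖ < r → μ₀ + (∑' i, s i * t ^ i) • φ ∈ LieLaw n) :
    (∀ X Y Z, circ μ₀ φ X Y Z + circ φ μ₀ X Y Z = 0) ∧
      (∀ X Y Z, circ φ φ X Y Z = 0) := by
  have hs : ∃ i ≠ 0, s i ≠ 0 := hsne.imp fun i hi => ⟨fun h => hi (h ▸ hs0), hi⟩
  exact stmt14_general μ₀.toLinearMap₁₂ φ.toLinearMap₁₂ hs hr hconv hlaw
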